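/- Assume μ > L_f. Let L_K = L_f + ρ‖A‖² + μ, set λ = L_K and γ_s = μ − L_f + λ, and let 0 < τ ≤ 1/(6λ). Fix x ∈ X, y ∈ F, z, z' ∈ E, define φ(w) = inf_{u ∈ X} [ K(u, y, z') + (λ/2)‖u − w‖² ] for w ∈ E, and suppose this infimum is attained at w = x. Suppose u° ∈ X minimizes w ↦ K(w, y, z) + (λ/2)‖w − x‖² over X. Let (Ω, P) be a probability space and G : Ω → E a measurable map with ∫ ‖G‖² dP < ∞, ∫ G dP = ∇ₓK(x, y, z), and ∫ ‖G(ω) − ∇ₓK(x, y, z)‖² dP(ω) ≤ σ² for some σ ≥ 0; set x⁺(ω) = proj_X(x − τ·G(ω)) and assume ω ↦ φ(x⁺(ω)) is integrable. Then ∫ φ(x⁺(ω)) dP(ω) ≤ φ(x) − (τλ²/16)·‖u° − x‖² + (λτμ + 2λτ²μ² + τλ²μ²/(8γ_s²))·‖z − z'‖² + λτ²·σ². -/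

import Mathlib

open MeasureTheory
open scoped RealInnerProductSpace

lemma aux_small (a c : ℝ) (h : ∀ t : ℝ, 0 < t → t ≤ 1 → 0 ≤ t * a + t^2 * c) : 0 ≤ a := by
  by_contra hneg
  push Not at hneg
  have hc : 0 < |c| + |a| + 1 := by positivity
  have hle : -a ≤ |c| + |a| + 1 := by
    have := neg_le_abs a
    have := abs_nonneg c
    linarith
  set s := |c| + |a| + 1 with hs
  have h1 := h (-a / (2 * s)) (by apply div_pos <;> linarith)
    (by rw [div_le_one (by positivity)]; linarith)
  have ht : 0 < -a / (2 * s) := by apply div_pos <;> linarith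
  set t := -a / (2 * s) with htd
  have h2 : t * s = -a / 2 := by rw [htd]; field_simp
  have h3 : c ≤ s := by
    have := le_abs_self c
    have := abs_nonneg a
    linarith
  have h4 : t * c ≤ t * s := mul_le_mul_of_nonneg_left h3 ht.le
  nlinarith [mul_pos ht (neg_pos.mpr hneg)]

lemma aux_descent {E : Type*} [NormedAddCommGroup E] [InnerProductSpace ℝ E] [CompleteSpace E]
    (f : E → ℝ) (f' : E → E) (Lf : ℝ)
    (hf : ∀ x, HasGradientAt f (f' x) x)
    (hlip : ∀ u v, ‖f' u - f' v‖ ≤ Lf * ‖u - v‖) (u v : E) :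
    |f v - f u - ⟪f' u, v - u⟫| ≤ Lf / 2 * ‖v - u‖^2 := by
  set d := v - u with hd
  have hl : ∀ t : ℝ, HasDerivAt (fun s : ℝ => u + s • d) d t := by
    intro t
    simpa using ((hasDerivAt_id t).smul_const d).const_add u
  have hder : ∀ t : ℝ, HasDerivAt (fun s : ℝ => f (u + s • d)) ⟪f' (u + t • d), d⟫ t := by
    intro t
    have := (hf (u + t • d)).hasFDerivAt.comp_hasDerivAt t (hl t)
    simpa [Function.comp_def] using this
  have hsq : ∀ t : ℝ, HasDerivAt (fun s : ℝ => Lf / 2 * ‖d‖^2 * s^2) (Lf * ‖d‖^2 * t) t := by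
    intro t
    have := (hasDerivAt_pow 2 t).const_mul (Lf / 2 * ‖d‖^2)
    refine this.congr_deriv ?_
    norm_num
    ring
  have hlin : ∀ t : ℝ, HasDerivAt (fun s : ℝ => s * ⟪f' u, d⟫) ⟪f' u, d⟫ t := by
    intro t
    simpa using (hasDerivAt_id t).mul_const ⟪f' u, d⟫
  have hbd : ∀ t : ℝ, 0 ≤ t → |⟪f' (u + t • d), d⟫ - ⟪f' u, d⟫| ≤ Lf * ‖d‖^2 * t := by
    intro t ht
    rw [← inner_sub_left]
    refine (abs_real_inner_le_norm _ _).trans ?_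
    have h1 := hlip (u + t • d) u
    rw [add_sub_cancel_left, norm_smul, Real.norm_of_nonneg ht] at h1
    nlinarith [mul_le_mul_of_nonneg_right h1 (norm_nonneg d)]
  have hud : u + (1:ℝ) • d = v := by simp [hd]
  have hanti : ∀ (h h' : ℝ → ℝ), (∀ t, HasDerivAt h (h' t) t) → (∀ t, 0 ≤ t → h' t ≤ 0) →
      h 1 ≤ h 0 := by
    intro h h' hh hneg
    have : AntitoneOn h (Set.Ici 0) := by
      refine antitoneOn_of_deriv_nonpos (convex_Ici 0)
        (fun t _ => (hh t).continuousAt.continuousWithinAt)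
        (fun t _ => (hh t).differentiableAt.differentiableWithinAt) ?_
      intro t ht
      rw [interior_Ici] at ht
      rw [(hh t).deriv]
      exact hneg t (le_of_lt ht)
    exact this (by simp) (by simp) zero_le_one
  have hA := hanti _ _ (fun t => ((hder t).sub (hlin t)).sub (hsq t)) (fun t ht => by
    have := (abs_le.mp (hbd t ht)).2
    linarith)
  have hB := hanti _ _ (fun t => ((hlin t).sub (hder t)).sub (hsq t)) (fun t ht => by
    have := (abs_le.mp (hbd t ht)).1
    linarith)
  simp only [Pi.sub_apply, hud] at hA hB
  simp at hA hB
  rw [abs_le]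
  constructor <;> linarith

set_option maxHeartbeats 2000000 in
theorem stmt_2
    {E F : Type*}
    [NormedAddCommGroup E] [InnerProductSpace ℝ E] [FiniteDimensional ℝ E]
    [NormedAddCommGroup F] [InnerProductSpace ℝ F] [FiniteDimensional ℝ F]
    (A : E →L[ℝ] F) (b : F) (X : Set E)
    (hXne : X.Nonempty) (hXcl : IsClosed X) (hXcv : Convex ℝ X)
    (f : E → ℝ) (f' : E → E) (Lf : ℝ) (hLf : 0 ≤ Lf)
    (hf : ∀ x, HasGradientAt f (f' x) x)
    (hlip : ∀ u v, ‖f' u - f' v‖ ≤ Lf * ‖u - v‖)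
    (ρ μ : ℝ) (hρ : 0 ≤ ρ) (hμ : 0 < μ)
    (K : E → F → E → ℝ)
    (hK : ∀ x y z, K x y z =
      f x + ⟪A x - b, y⟫ + (ρ/2) * ‖A x - b‖^2 + (μ/2) * ‖x - z‖^2)
    (gradK : E → F → E → E)
    (hgradK : ∀ x y z, gradK x y z =
      f' x + ContinuousLinearMap.adjoint A y
        + ρ • ContinuousLinearMap.adjoint A (A x - b) + μ • (x - z))
    (proj : E → E)
    (hproj : ∀ w, proj w ∈ X ∧ ∀ v ∈ X, ‖w - proj w‖ ≤ ‖w - v‖)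
    (hμLf : Lf < μ)
    (lam : ℝ) (hlamdef : lam = Lf + ρ * ‖A‖^2 + μ)
    (γs : ℝ) (hγs : γs = μ - Lf + lam)
    (τ : ℝ) (hτ0 : 0 < τ) (hτ : τ ≤ 1/(6*lam))
    (x : E) (hx : x ∈ X) (y : F) (z z' : E)
    (φ : E → ℝ)
    (hφ : ∀ w, φ w = ⨅ u : X, (K u y z' + (lam/2) * ‖(u : E) - w‖^2))
    (hatt : ∃ u ∈ X, K u y z' + (lam/2) * ‖u - x‖^2 = φ x)
    (u₀ : E)
    (hu₀ : u₀ ∈ X ∧ ∀ w ∈ X,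
      K u₀ y z + (lam/2) * ‖u₀ - x‖^2 ≤ K w y z + (lam/2) * ‖w - x‖^2)
    (σ : ℝ) (hσ : 0 ≤ σ)
    {Ω : Type*} [MeasurableSpace Ω] (P : Measure Ω) [IsProbabilityMeasure P]
    [MeasurableSpace E] [BorelSpace E]
    (G : Ω → E) (hGm : Measurable G)
    (hGsq : Integrable (fun ω => ‖G ω‖^2) P)
    (hGmean : ∫ ω, G ω ∂P = gradK x y z)
    (hGvar : ∫ ω, ‖G ω - gradK x y z‖^2 ∂P ≤ σ^2)
    (hint : Integrable (fun ω => φ (proj (x - τ • G ω))) P) :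
    ∫ ω, φ (proj (x - τ • G ω)) ∂P
      ≤ φ x - (τ*lam^2/16) * ‖u₀ - x‖^2
        + (lam*τ*μ + 2*lam*τ^2*μ^2 + τ*lam^2*μ^2/(8*γs^2)) * ‖z - z'‖^2
        + lam*τ^2*σ^2 := by
  have hlam : 0 < lam := by
    have : 0 ≤ ρ * ‖A‖^2 := by positivity
    linarith
  have hlamμ : μ ≤ lam := by
    have : 0 ≤ ρ * ‖A‖^2 := by positivity
    linarith
  have hγ : 0 < γs := by linarith
  have hγμ : μ ≤ γs := by linarith
  have hτlam : τ * lam ≤ 1/6 := by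
    rw [le_div_iff₀ (by positivity)] at hτ
    linarith
  have hdesc := aux_descent f f' Lf hf hlip
  have hKexp : ∀ (z u v : E), K v y z - K u y z - ⟪gradK u y z, v - u⟫ =
      (f v - f u - ⟪f' u, v - u⟫) + ρ/2 * ‖A (v - u)‖^2 + μ/2 * ‖v - u‖^2 := by
    intro z u v
    obtain ⟨d, rfl⟩ : ∃ d, v = u + d := ⟨v - u, by simp⟩
    have e1 : A (u + d) - b = (A u - b) + A d := by rw [map_add]; abel
    have e2 : u + d - z = (u - z) + d := by abel
    rw [hK, hK, hgradK, e1, e2, add_sub_cancel_left, norm_add_sq_real, norm_add_sq_real,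
      inner_add_left, inner_add_left, inner_add_left, inner_add_left, inner_smul_left,
      inner_smul_left, ContinuousLinearMap.adjoint_inner_left,
      ContinuousLinearMap.adjoint_inner_left, real_inner_comm (A d) y]
    simp
    ring
  have hKlo : ∀ (z u v : E), K u y z + ⟪gradK u y z, v - u⟫ + (μ - Lf)/2 * ‖v - u‖^2
      ≤ K v y z := by
    intro z u v
    have h1 := hKexp z u v
    have h2 := (abs_le.mp (hdesc u v)).1
    have h3 : 0 ≤ ρ/2 * ‖A (v - u)‖^2 := by positivity
    linarith
  have hKup : ∀ (z u v : E), K v y z ≤ K u y z + ⟪gradK u y z, v - u⟫ + lam/2 * ‖v - u‖^2 := by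
    intro z u v
    have h1 := hKexp z u v
    have h2 := (abs_le.mp (hdesc u v)).2
    have h3 : ‖A (v - u)‖^2 ≤ ‖A‖^2 * ‖v - u‖^2 := by
      rw [← mul_pow]
      exact pow_le_pow_left₀ (norm_nonneg _) (A.le_opNorm _) 2
    have h4 := mul_le_mul_of_nonneg_left h3 (by positivity : 0 ≤ ρ/2)
    rw [hlamdef]
    linarith
  have hmin : ∀ (z u : E), u ∈ X →
      (∀ w ∈ X, K u y z + (lam/2) * ‖u - x‖^2 ≤ K w y z + (lam/2) * ‖w - x‖^2) →
      ∀ w ∈ X, K u y z + (lam/2) * ‖u - x‖^2 + γs/2 * ‖w - u‖^2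
        ≤ K w y z + (lam/2) * ‖w - x‖^2 := by
    intro z u hu hm w hw
    have hq : ∀ d : E, ‖u + d - x‖^2 = ‖u - x‖^2 + 2 * ⟪u - x, d⟫ + ‖d‖^2 := by
      intro d
      rw [← norm_add_sq_real]
      congr 2
      abel
    have hvi : 0 ≤ ⟪gradK u y z, w - u⟫ + lam * ⟪u - x, w - u⟫ := by
      apply aux_small _ (lam * ‖w - u‖^2)
      intro t ht0 ht1
      have hmem : u + t • (w - u) ∈ X := hXcv.add_smul_sub_mem hu hw ⟨ht0.le, ht1⟩
      have h1 := hm _ hmem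
      have h2 := hKup z u (u + t • (w - u))
      rw [hq] at h1
      rw [add_sub_cancel_left] at h2
      rw [norm_smul, inner_smul_right, Real.norm_of_nonneg ht0.le, mul_pow] at h1 h2
      linarith
    have h1 := hKlo z u w
    have h2 := hq (w - u)
    rw [add_sub_cancel] at h2
    rw [h2, hγs]
    linarith
  have hbdd : ∀ w : E, BddBelow (Set.range
      (fun u : X => K u y z' + (lam/2) * ‖(u : E) - w‖^2)) := by
    intro w
    refine ⟨K x y z' - ‖gradK x y z'‖^2 / (2 * (μ - Lf)), ?_⟩
    rintro _ ⟨u, rfl⟩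
    have h1 := hKlo z' x u
    have h2 := neg_le_of_abs_le (abs_real_inner_le_norm (gradK x y z') ((u:E) - x))
    have h3 : 0 ≤ (lam/2) * ‖(u : E) - w‖^2 := by positivity
    have hm : 0 < μ - Lf := by linarith
    have h4 : ‖gradK x y z'‖ * ‖(u:E) - x‖ ≤
        ‖gradK x y z'‖^2 / (2 * (μ - Lf)) + (μ - Lf)/2 * ‖(u:E) - x‖^2 := by
      have : ‖gradK x y z'‖^2 / (2 * (μ - Lf)) + (μ - Lf)/2 * ‖(u:E) - x‖^2
        - ‖gradK x y z'‖ * ‖(u:E) - x‖ =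
        (‖gradK x y z'‖ - (μ - Lf) * ‖(u:E) - x‖)^2 / (2 * (μ - Lf)) := by
          field_simp
          ring
      have h5 : 0 ≤ (‖gradK x y z'‖ - (μ - Lf) * ‖(u:E) - x‖)^2 / (2 * (μ - Lf)) := by
        positivity
      linarith
    show _ ≤ K u y z' + (lam/2) * ‖(u : E) - w‖^2
    linarith
  have hφle : ∀ w, ∀ u ∈ X, φ w ≤ K u y z' + (lam/2) * ‖u - w‖^2 := by
    intro w u hu
    rw [hφ]
    exact ciInf_le (hbdd w) (⟨u, hu⟩ : X)
  obtain ⟨v, hv, hvφ⟩ := hatt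
  have hvs := hmin z' v hv (fun w hw => by rw [hvφ]; exact hφle x w hw)
  have hus := hmin z u₀ hu₀.1 hu₀.2
  have hswitch : ∀ p q : E, K p y z - K q y z = K p y z' - K q y z' + μ * ⟪p - q, z' - z⟫ := by
    intro p q
    have e : ∀ p : E, ‖p - z‖^2 = ‖p - z'‖^2 + 2 * ⟪p - z', z' - z⟫ + ‖z' - z‖^2 := by
      intro p
      rw [← norm_add_sq_real]
      congr 2
      abel
    have e2 : ⟪p - q, z' - z⟫ = ⟪p - z', z' - z⟫ - ⟪q - z', z' - z⟫ := by
      rw [← inner_sub_left]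
      congr 1
      abel
    rw [hK, hK, hK p y z', hK q y z', e p, e q, e2]
    ring
  have hinn : ∀ p q : E, μ * ⟪p - q, z' - z⟫ ≤ μ * (‖p - q‖ * ‖z - z'‖) := by
    intro p q
    rw [norm_sub_rev z z']
    exact mul_le_mul_of_nonneg_left (real_inner_le_norm _ _) hμ.le
  have hdist : ‖u₀ - v‖ ≤ μ / γs * ‖z - z'‖ := by
    have h1 := hvs u₀ hu₀.1
    have h2 := hus v hv
    have h3 := hswitch v u₀
    have h4 := hinn v u₀
    rw [norm_sub_rev v u₀] at h2 h4
    have h5 : γs * ‖u₀ - v‖^2 ≤ μ * (‖u₀ - v‖ * ‖z - z'‖) := by linarith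
    rcases (norm_nonneg (u₀ - v)).eq_or_lt with h0 | h0
    · rw [← h0]; positivity
    · rw [div_mul_eq_mul_div, le_div_iff₀ hγ]
      have : ‖u₀ - v‖ * (‖u₀ - v‖ * γs) ≤ ‖u₀ - v‖ * (μ * ‖z - z'‖) := by linarith
      exact le_of_mul_le_mul_left this h0
  have hu₀x : ‖u₀ - x‖^2 ≤ 2 * ‖v - x‖^2 + 2 * (μ^2 / γs^2 * ‖z - z'‖^2) := by
    have h1 : ‖u₀ - x‖ ≤ ‖u₀ - v‖ + ‖v - x‖ := norm_sub_le_norm_sub_add_norm_sub _ _ _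
    have h2 : ‖u₀ - v‖^2 ≤ (μ / γs * ‖z - z'‖)^2 := pow_le_pow_left₀ (norm_nonneg _) hdist 2
    rw [mul_pow, div_pow] at h2
    have h3 := pow_le_pow_left₀ (norm_nonneg _) h1 2
    nlinarith [sq_nonneg (‖u₀ - v‖ - ‖v - x‖)]
  set g := gradK x y z with hg
  have hpt : ∀ n : E, φ (proj (x - τ • (g + n))) ≤ φ x + lam/2 * (2 * τ * ⟪n, v - x⟫
      + 2 * τ^2 * ‖n‖^2 - τ * lam * ‖v - x‖^2 + τ * μ * ‖z - z'‖^2) := by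
    intro n
    obtain ⟨hpX, hpm⟩ := hproj (x - τ • (g + n))
    set p := proj (x - τ • (g + n)) with hp
    have hvi : 0 ≤ -⟪x - τ • (g + n) - p, v - p⟫ := by
      apply aux_small _ (‖v - p‖^2 / 2)
      intro t ht0 ht1
      have hmem : p + t • (v - p) ∈ X := hXcv.add_smul_sub_mem hpX hv ⟨ht0.le, ht1⟩
      have h1 := pow_le_pow_left₀ (norm_nonneg _) (hpm _ hmem) 2
      rw [← sub_sub, norm_sub_sq_real (x - τ • (g + n) - p), norm_smul, inner_smul_right,
        Real.norm_of_nonneg ht0.le, mul_pow] at h1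
      linarith
    have hvi2 : ⟪x - p, v - p⟫ ≤ τ * (⟪g, v - x⟫ + ⟪g, x - p⟫ + ⟪n, v - x⟫ + ⟪n, x - p⟫) := by
      have e : x - τ • (g + n) - p = (x - p) - τ • (g + n) := by abel
      have e2 : ∀ a : E, ⟪a, v - p⟫ = ⟪a, v - x⟫ + ⟪a, x - p⟫ := by
        intro a
        rw [← inner_add_right]
        congr 1
        abel
      rw [e, inner_sub_left, inner_smul_left, inner_add_left, e2 g, e2 n] at hvi
      simp only [conj_trivial] at hvi
      linarith
    have h0 := hφle p v hv
    have hid : ‖v - x‖^2 = ‖v - p‖^2 - 2 * ⟪x - p, v - p⟫ + ‖x - p‖^2 := by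
      rw [real_inner_comm, ← norm_sub_sq_real]
      congr 2
      abel
    have hn : 2 * τ * ⟪n, x - p⟫ ≤ 2 * τ^2 * ‖n‖^2 + ‖x - p‖^2 / 2 := by
      have h1 := mul_le_mul_of_nonneg_left (real_inner_le_norm n (x - p)) hτ0.le
      nlinarith [sq_nonneg (2 * τ * ‖n‖ - ‖x - p‖)]
    have hg1 := hKlo z x v
    have hg2 := hKup z x p
    have hneg : ⟪g, p - x⟫ = -⟪g, x - p⟫ := by rw [← inner_neg_right, neg_sub]
    rw [← hg] at hg1 hg2
    rw [hneg, norm_sub_rev p x] at hg2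
    have hsw := hswitch v p
    have hsw2 := hinn v p
    have hvp := hvs p hpX
    rw [norm_sub_rev p x, norm_sub_rev p v] at hvp
    have hyoung : 2 * (μ * (‖v - p‖ * ‖z - z'‖)) ≤ γs * ‖v - p‖^2 + μ * ‖z - z'‖^2 := by
      nlinarith [mul_nonneg hμ.le (sq_nonneg (‖v - p‖ - ‖z - z'‖)),
        mul_le_mul_of_nonneg_right hγμ (sq_nonneg ‖v - p‖)]
    have hm : 0 ≤ (μ - Lf) * ‖v - x‖^2 := mul_nonneg (by linarith) (sq_nonneg _)
    have hcomb : 2 * (⟪g, v - x⟫ + ⟪g, x - p⟫) ≤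
        2 * lam * ‖x - p‖^2 - lam * ‖v - x‖^2 + μ * ‖z - z'‖^2 := by
      linarith
    have hcomb2 := mul_le_mul_of_nonneg_left hcomb hτ0.le
    have hsm := mul_le_mul_of_nonneg_right hτlam (sq_nonneg ‖x - p‖)
    have hfin : ‖v - p‖^2 - ‖v - x‖^2 ≤ 2 * τ * ⟪n, v - x⟫
      + 2 * τ^2 * ‖n‖^2 - τ * lam * ‖v - x‖^2 + τ * μ * ‖z - z'‖^2 := by
      have := sq_nonneg ‖x - p‖
      linarith
    have := mul_le_mul_of_nonneg_left hfin (by positivity : 0 ≤ lam/2)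
    linarith
  have hGmem : MemLp G 2 P := by
    rw [memLp_two_iff_integrable_sq_norm hGm.aestronglyMeasurable]
    exact hGsq
  have hnmem : MemLp (fun ω => G ω - g) 2 P := hGmem.sub (memLp_const g)
  have hGi : Integrable G P := hGmem.integrable (by norm_num)
  have hni : Integrable (fun ω => G ω - g) P := hnmem.integrable (by norm_num)
  have hnsq : Integrable (fun ω => ‖G ω - g‖^2) P :=
    (memLp_two_iff_integrable_sq_norm hnmem.1).1 hnmem
  have hn0 : ∫ ω, (G ω - g) ∂P = 0 := by
    rw [integral_sub hGi (integrable_const g), hGmean]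
    simp
  have hin0 : ∫ ω, ⟪G ω - g, v - x⟫ ∂P = 0 := by
    have := integral_inner (𝕜 := ℝ) hni (v - x)
    rw [hn0, inner_zero_right] at this
    rw [← this]
    congr 1
    ext ω
    exact real_inner_comm _ _
  have hini : Integrable (fun ω => ⟪G ω - g, v - x⟫) P := hni.inner_const (v - x)
  set c : ℝ := φ x + lam/2 * (- (τ * lam * ‖v - x‖^2) + τ * μ * ‖z - z'‖^2) with hc
  have hR : Integrable (fun ω => (lam * τ) * ⟪G ω - g, v - x⟫ + (lam * τ^2) * ‖G ω - g‖^2 + c) P :=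
    ((hini.const_mul _).add (hnsq.const_mul _)).add (integrable_const c)
  have hI : ∫ ω, φ (proj (x - τ • G ω)) ∂P ≤
      ∫ ω, ((lam * τ) * ⟪G ω - g, v - x⟫ + (lam * τ^2) * ‖G ω - g‖^2 + c) ∂P := by
    refine integral_mono hint hR ?_
    intro ω
    have := hpt (G ω - g)
    rw [add_sub_cancel] at this
    show φ (proj (x - τ • G ω)) ≤ _
    refine this.trans (le_of_eq ?_)
    simp only [hc]
    ring
  have hI2 : ∫ ω, ((lam * τ) * ⟪G ω - g, v - x⟫ + (lam * τ^2) * ‖G ω - g‖^2 + c) ∂P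
      = (lam * τ^2) * ∫ ω, ‖G ω - g‖^2 ∂P + c := by
    have hs : Integrable (fun ω => (lam * τ) * ⟪G ω - g, v - x⟫ + (lam * τ^2) * ‖G ω - g‖^2) P :=
      (hini.const_mul _).add (hnsq.const_mul _)
    rw [integral_add hs (integrable_const c),
      integral_add (hini.const_mul _) (hnsq.const_mul _), integral_const_mul,
      integral_const_mul, hin0]
    simp
  rw [hI2] at hI
  have hv1 := mul_le_mul_of_nonneg_left hGvar (by positivity : 0 ≤ lam * τ^2)
  have hv2 := mul_le_mul_of_nonneg_left hu₀x (by positivity : 0 ≤ τ * lam^2 / 16)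
  have hp1 : 0 ≤ τ * lam^2 * ‖v - x‖^2 := by positivity
  have hp2 : 0 ≤ lam * τ * μ * ‖z - z'‖^2 := by positivity
  have hp3 : 0 ≤ lam * τ^2 * μ^2 * ‖z - z'‖^2 := by positivity
  have he : τ*lam^2*μ^2/(8*γs^2) = τ * lam^2 / 8 * (μ^2 / γs^2) := by
    field_simp
  rw [he]
  rw [hc] at hI
  linarith
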